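/- Every short covering of 𝔽_7³ has at least 5 elements. -/

import Mathlib

open Set Pointwise

variable {F : Type*} [Field F]

/-- Hamming distance on `𝔽_q³`. -/
noncomputable def hdist (u v : Fin 3 → F) : ℕ := Set.ncard {i : Fin 3 | u i ≠ v i}

/-- The ball of radius 1 centered at `u`. -/
def ball (u : Fin 3 → F) : Set (Fin 3 → F) := {v | hdist u v ≤ 1}

/-- The extended ball of `u`: the union of the balls centered at scalar multiples of `u`. -/
def extBall (u : Fin 3 → F) : Set (Fin 3 → F) := ⋃ l : F, ball (l • u)

/-- `D_q`: vectors with pairwise distinct, nonzero coordinates. -/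
def Dq : Set (Fin 3 → F) :=
  {u | u 0 ≠ u 1 ∧ u 0 ≠ u 2 ∧ u 1 ≠ u 2 ∧ u 0 ≠ 0 ∧ u 1 ≠ 0 ∧ u 2 ≠ 0}

/-- `B̃(u) = B(u) ∩ D_q`. -/
def ballD (u : Fin 3 → F) : Set (Fin 3 → F) := ball u ∩ Dq

/-- `Ẽ(u) = E(u) ∩ D_q`. -/
def extBallD (u : Fin 3 → F) : Set (Fin 3 → F) := extBall u ∩ Dq

/-- `H` is a short covering if the extended balls centered at its elements cover the space. -/
def ShortCovering (H : Set (Fin 3 → F)) : Prop := (⋃ h ∈ H, extBall h) = Set.univ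

instance : Fact (Nat.Prime 7) := ⟨by norm_num⟩

/-!
Let `q` be the order of the field, and suppose that a short covering `H` has fewer than
`(q + 2) / 2` elements. A vector with at most one zero coordinate that is covered by `h` is
proportional to `h` away from some coordinate, so `h` determines a ratio of two of its coordinates.
Since there are fewer elements in `H` than nonzero ratios, every coordinate plane contains a nonzero
element of `H`; as no nonzero vector lies in all three planes, at least two elements of `H` have a
zero coordinate. Choose `x ≠ 0` different from all ratios `h 1 / h 0`. Then `(1, x, y)` with `y ≠ 0`
can only be covered by some `h` with `h 2 / h 0 = y` or `x * (h 2 / h 1) = y`, the coordinates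
involved being nonzero. The zero coordinates found above leave at most `2 * |H| - 3` such values of
`y`, which is less than `q - 1`.
-/

lemma mem_extBall_iff {h v : Fin 3 → F} :
    v ∈ extBall h ↔ ∃ l : F, ∃ m, ∀ i ≠ m, v i = l * h i := by
  simp only [extBall, ball, hdist, mem_iUnion, mem_ofPred_eq, Pi.smul_apply, smul_eq_mul]
  refine exists_congr fun l ↦ ?_
  rw [ncard_le_one_iff_subset_singleton]
  refine exists_congr fun m ↦ forall_congr' fun i ↦ ?_
  rw [mem_ofPred_eq, mem_singleton_iff, ← not_imp_not, not_not, eq_comm (a := l * h i)]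

lemma exists_ne_and_ne_of_fin_three (m k : Fin 3) : ∃ i, i ≠ m ∧ i ≠ k := by
  decide +revert

lemma exists_eq_mul_of_mem_extBall {h v : Fin 3 → F} {k : Fin 3} (hv : ∀ i ≠ k, v i ≠ 0)
    (hvh : v ∈ extBall h) : ∃ m, ∃ l ≠ 0, ∀ i ≠ m, h i = l * v i := by
  obtain ⟨l, m, hl⟩ := mem_extBall_iff.1 hvh
  obtain ⟨i, him, hik⟩ := exists_ne_and_ne_of_fin_three m k
  have l_ne_zero : l ≠ 0 := left_ne_zero_of_mul (hl i him ▸ hv i hik)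
  exact ⟨m, l⁻¹, inv_ne_zero l_ne_zero, fun j hj ↦ by rw [hl j hj, inv_mul_cancel_left₀ l_ne_zero]⟩

lemma exists_ne_notMem_of_ncard_add_one_lt {α : Type*} [Finite α] {s : Set α}
    (hs : s.ncard + 1 < Nat.card α) (a : α) : ∃ t ≠ a, t ∉ s := by
  have insert_lt : (insert a s).ncard < (univ : Set α).ncard := by
    rw [ncard_univ]
    exact (ncard_insert_le a s).trans_lt hs
  obtain ⟨t, -, ht⟩ := exists_mem_notMem_of_ncard_lt_ncard insert_lt
  exact ⟨t, fun h ↦ ht (.inl h), fun h ↦ ht (.inr h)⟩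

lemma exists_ne_forall_apply_ne {α β : Type*} [Finite β] {s : Set α} (hs : s.Finite)
    (hcard : s.ncard + 1 < Nat.card β) (f : α → β) (b : β) : ∃ t ≠ b, ∀ x ∈ s, f x ≠ t := by
  have image_ncard_lt : (f '' s).ncard + 1 < Nat.card β :=
    (Nat.add_le_add_right (ncard_image_le hs) 1).trans_lt hcard
  obtain ⟨t, htb, ht⟩ := exists_ne_notMem_of_ncard_add_one_lt image_ncard_lt b
  exact ⟨t, htb, fun x hx hxt ↦ ht ⟨x, hx, hxt⟩⟩

namespace ShortCovering

variable {H : Set (Fin 3 → F)}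

lemma exists_mem_extBall (hH : ShortCovering H) (v : Fin 3 → F) : ∃ h ∈ H, v ∈ extBall h := by
  simpa only [mem_iUnion₂, exists_prop] using eq_univ_iff_forall.1 hH v

variable [Finite F]

lemma exists_ne_zero_apply_eq_zero (hH : ShortCovering H) (hcard : H.ncard + 1 < Nat.card F)
    (k : Fin 3) : ∃ h ∈ H, h ≠ 0 ∧ h k = 0 := by
  obtain ⟨i, j, hij, hik, hjk⟩ : ∃ i j, j ≠ i ∧ i ≠ k ∧ j ≠ k := by decide +revert
  obtain ⟨t, ht₀, ht⟩ := exists_ne_forall_apply_ne H.toFinite hcard (fun h ↦ h j / h i) 0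
  let v : Fin 3 → F := fun m ↦ if m = k then 0 else if m = i then 1 else t
  have v_ne_zero : ∀ m ≠ k, v m ≠ 0 := fun m hm ↦ by
    by_cases hmi : m = i <;> simp [v, hm, hmi, hik, ht₀]
  obtain ⟨h, hh, hvh⟩ := hH.exists_mem_extBall v
  obtain ⟨m, l, hl, hlv⟩ := exists_eq_mul_of_mem_extBall v_ne_zero hvh
  have hkm : k ≠ m := by
    rintro rfl
    refine ht h hh ?_
    rw [hlv i hik, hlv j hjk, mul_div_mul_left _ _ hl]
    simp [v, hik, hjk, hij]
  obtain ⟨n, hnm, hnk⟩ := exists_ne_and_ne_of_fin_three m k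
  refine ⟨h, hh, fun h_zero ↦ ?_, by simp [hlv k hkm, v]⟩
  exact mul_ne_zero hl (v_ne_zero n hnk) (by rw [← hlv n hnm, h_zero, Pi.zero_apply])

lemma ncard_forall_ne_zero_add_two_le (hH : ShortCovering H) (hcard : H.ncard + 1 < Nat.card F) :
    {h ∈ H | ∀ i, h i ≠ 0}.ncard + 2 ≤ H.ncard := by
  obtain ⟨a, ha, ha_ne, ha₀⟩ := hH.exists_ne_zero_apply_eq_zero hcard 0
  obtain ⟨i, hai⟩ := Function.ne_iff.1 ha_ne
  obtain ⟨b, hb, -, hbi⟩ := hH.exists_ne_zero_apply_eq_zero hcard i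
  have hab : a ≠ b := by
    rintro rfl
    exact hai hbi
  have subset_diff : {h ∈ H | ∀ i, h i ≠ 0} ⊆ H \ {a, b} := by
    rintro h ⟨hh, h_ne⟩
    refine ⟨hh, ?_⟩
    rintro (rfl | rfl)
    exacts [h_ne 0 ha₀, h_ne i hbi]
  calc {h ∈ H | ∀ i, h i ≠ 0}.ncard + 2
      ≤ (H \ {a, b}).ncard + ({a, b} : Set (Fin 3 → F)).ncard :=
        add_le_add (ncard_le_ncard subset_diff) (ncard_pair hab).ge
    _ = H.ncard := ncard_sdiff_add_ncard_of_subset (pair_subset ha hb)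

lemma ncard_apply_ne_zero_add_one_le (hH : ShortCovering H) (hcard : H.ncard + 1 < Nat.card F)
    (k : Fin 3) : {h ∈ H | h k ≠ 0}.ncard + 1 ≤ H.ncard := by
  obtain ⟨a, ha, -, hak⟩ := hH.exists_ne_zero_apply_eq_zero hcard k
  exact ncard_lt_ncard ⟨sep_subset _ _, fun hsub ↦ (hsub ha).2 hak⟩

lemma ncard_ne_zero_add_ncard_ne_zero_add_three_le (hH : ShortCovering H)
    (hcard : H.ncard + 1 < Nat.card F) :
    {h ∈ H | h 0 ≠ 0 ∧ h 2 ≠ 0}.ncard + {h ∈ H | h 1 ≠ 0 ∧ h 2 ≠ 0}.ncard + 3 ≤ 2 * H.ncard := by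
  set A := {h ∈ H | h 0 ≠ 0 ∧ h 2 ≠ 0}
  set B := {h ∈ H | h 1 ≠ 0 ∧ h 2 ≠ 0}
  have union_subset : A ∪ B ⊆ {h ∈ H | h 2 ≠ 0} := by
    rintro h (⟨hh, -, h₂⟩ | ⟨hh, -, h₂⟩) <;> exact ⟨hh, h₂⟩
  have inter_subset : A ∩ B ⊆ {h ∈ H | ∀ i, h i ≠ 0} := by
    rintro h ⟨⟨hh, h₀, h₂⟩, -, h₁, -⟩
    refine ⟨hh, fun i ↦ ?_⟩
    fin_cases i
    exacts [h₀, h₁, h₂]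
  calc A.ncard + B.ncard + 3
      = ((A ∪ B).ncard + 1) + ((A ∩ B).ncard + 2) := by
        rw [← ncard_union_add_ncard_inter A B]
        lia
    _ ≤ ({h ∈ H | h 2 ≠ 0}.ncard + 1) + ({h ∈ H | ∀ i, h i ≠ 0}.ncard + 2) := by
        gcongr <;> exact toFinite _
    _ ≤ H.ncard + H.ncard :=
        add_le_add (hH.ncard_apply_ne_zero_add_one_le hcard 2)
          (hH.ncard_forall_ne_zero_add_two_le hcard)
    _ = 2 * H.ncard := (two_mul _).symm

lemma exists_ne_zero_forall_div_ne_and_mul_div_ne (hH : ShortCovering H)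
    (hcard : H.ncard + 1 < Nat.card F) (two_mul_le : 2 * H.ncard ≤ Nat.card F + 1) (x : F) :
    ∃ y ≠ 0, (∀ h ∈ H, h 0 ≠ 0 → h 2 ≠ 0 → h 2 / h 0 ≠ y) ∧
      ∀ h ∈ H, h 1 ≠ 0 → h 2 ≠ 0 → x * (h 2 / h 1) ≠ y := by
  let A := (fun h ↦ h 2 / h 0) '' {h ∈ H | h 0 ≠ 0 ∧ h 2 ≠ 0}
  let B := (fun h ↦ x * (h 2 / h 1)) '' {h ∈ H | h 1 ≠ 0 ∧ h 2 ≠ 0}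
  have union_lt : (A ∪ B).ncard + 1 < Nat.card F := by
    have hA : A.ncard ≤ {h ∈ H | h 0 ≠ 0 ∧ h 2 ≠ 0}.ncard := ncard_image_le
    have hB : B.ncard ≤ {h ∈ H | h 1 ≠ 0 ∧ h 2 ≠ 0}.ncard := ncard_image_le
    have := ncard_union_le A B
    have := hH.ncard_ne_zero_add_ncard_ne_zero_add_three_le hcard
    lia
  obtain ⟨y, hy₀, hy⟩ := exists_ne_notMem_of_ncard_add_one_lt union_lt 0
  exact ⟨y, hy₀, fun h hh h₀ h₂ hhy ↦ hy (.inl ⟨h, ⟨hh, h₀, h₂⟩, hhy⟩),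
    fun h hh h₁ h₂ hhy ↦ hy (.inr ⟨h, ⟨hh, h₁, h₂⟩, hhy⟩)⟩

end ShortCovering

theorem stmt_17_general [Finite F] (hF : 3 < Nat.card F) {H : Set (Fin 3 → F)}
    (hH : ShortCovering H) : Nat.card F + 2 ≤ 2 * H.ncard := by
  by_contra! hlt
  have hcard : H.ncard + 1 < Nat.card F := by lia
  obtain ⟨x, hx₀, hx⟩ := exists_ne_forall_apply_ne H.toFinite hcard (fun h ↦ h 1 / h 0) 0
  obtain ⟨y, hy₀, hy, hxy⟩ := hH.exists_ne_zero_forall_div_ne_and_mul_div_ne hcard (by lia) x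
  have v_ne_zero : ∀ i, ![1, x, y] i ≠ 0 := by simp [Fin.forall_fin_succ, hx₀, hy₀]
  obtain ⟨h, hh, hvh⟩ := hH.exists_mem_extBall ![1, x, y]
  obtain ⟨m, l, hl, hlv⟩ := exists_eq_mul_of_mem_extBall (k := 0) (fun i _ ↦ v_ne_zero i) hvh
  have h_ne_zero : ∀ i ≠ m, h i ≠ 0 := fun i hi ↦ hlv i hi ▸ mul_ne_zero hl (v_ne_zero i)
  have div_eq : ∀ i ≠ m, ∀ j ≠ m, h j / h i = ![1, x, y] j / ![1, x, y] i := fun i hi j hj ↦ by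
    rw [hlv i hi, hlv j hj, mul_div_mul_left _ _ hl]
  match m with
  | 0 =>
    refine hxy h hh (h_ne_zero 1 (by decide)) (h_ne_zero 2 (by decide)) ?_
    rw [div_eq 1 (by decide) 2 (by decide)]
    exact mul_div_cancel₀ y hx₀
  | 1 =>
    refine hy h hh (h_ne_zero 0 (by decide)) (h_ne_zero 2 (by decide)) ?_
    exact (div_eq 0 (by decide) 2 (by decide)).trans (div_one y)
  | 2 => exact hx h hh ((div_eq 0 (by decide) 1 (by decide)).trans (div_one x))

theorem stmt_17 (H : Set (Fin 3 → ZMod 7)) (hH : ShortCovering H) : 5 ≤ H.ncard := by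
  have := stmt_17_general (by simp) hH
  rw [Nat.card_zmod] at this
  lia
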